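/- Non-existence of discrete shock waves for the quadratic potential: let W(u) = u²/2. Then for every u_l ≠ u_r there is no discrete shock wave of the Newton chain on ℤ associated with (u_l, u_r); that is, there exist no φ ∈ C²(ℝ) and c ∈ ℝ such that c²φ''(x) = (φ(x+1) − φ(x)) − (φ(x) − φ(x−1)) for all x ∈ ℝ, φ'(x) → u_l as x → −∞, and φ'(x) → u_r as x → +∞ with u_l ≠ u_r. -/

import Mathlib

/-!
Write `u = φ'` and let `P' = φ`, `S₁' = P`, `S' = S₁` be iterated antiderivatives; let
`D f (x) = f (x+1) - 2 f x + f (x-1)`.  Integrating the equation `c² φ'' = D φ` once shows that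
`D P - c² u` is constant.  Since `P'' = u`, `D P` has the same limits as `u`
(`second_difference_bound`), so `(1 - c²) ul = (1 - c²) ur`, which forces `c² = 1`, and the
constant is `0`.  Integrating twice more, `D S - P` is affine.  Taylor expansion to fourth order
(`fourth_difference_bound`), with `S'' = P` and `S'''' = u`, shows that `D S - P` tends to `ul / 12`
at `-∞` and to `ur / 12` at `+∞`.  An affine function with finite limits is constant, so `ul = ur`.
-/

open Filter Topology

lemma exists_antideriv (f : ℝ → ℝ) (hf : Continuous f) :
    ∃ F : ℝ → ℝ, ∀ x, HasDerivAt F (f x) x :=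
  ⟨fun x => ∫ t in (0 : ℝ)..x, f t, fun _ =>
    intervalIntegral.integral_hasDerivAt_right (hf.intervalIntegrable _ _)
      (hf.stronglyMeasurableAtFilter _ _) hf.continuousAt⟩

lemma abs_le_of_deriv_bound {g g' : ℝ → ℝ} {C : ℝ} (h0 : g 0 = 0)
    (hg : ∀ h, HasDerivAt g (g' h) h) (hb : ∀ h ∈ Set.Icc (0 : ℝ) 1, |g' h| ≤ C) :
    ∀ h ∈ Set.Icc (0 : ℝ) 1, |g h| ≤ C := by
  intro h hh
  have key := (convex_Icc (0 : ℝ) 1).norm_image_sub_le_of_norm_hasDerivWithin_le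
    (fun y _ => (hg y).hasDerivWithinAt) hb (Set.left_mem_Icc.2 zero_le_one) hh
  rw [h0, sub_zero, sub_zero, Real.norm_eq_abs, Real.norm_eq_abs, abs_of_nonneg hh.1] at key
  have hC : 0 ≤ C := (abs_nonneg _).trans (hb h hh)
  exact key.trans (mul_le_of_le_one_right hC hh.2)

lemma hasDerivAt_shift_add {f f' : ℝ → ℝ} (hf : ∀ x, HasDerivAt f (f' x) x) (x h : ℝ) :
    HasDerivAt (fun h => f (x + h)) (f' (x + h)) h := by
  simpa using (hf (x + h)).comp_const_add x h

lemma hasDerivAt_shift_sub {f f' : ℝ → ℝ} (hf : ∀ x, HasDerivAt f (f' x) x) (x h : ℝ) :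
    HasDerivAt (fun h => f (x - h)) (-f' (x - h)) h := by
  simpa using (hf (x - h)).comp_const_sub x h

/-- If `f'' = u` is `ε`-close to `L` on `[x-1, x+1]`, the symmetric second difference of `f` with
step `h` is `2ε`-close to `h² L`. -/
lemma second_difference_bound {f f' u : ℝ → ℝ} (hf : ∀ x, HasDerivAt f (f' x) x)
    (hf' : ∀ x, HasDerivAt f' (u x) x) {x L ε : ℝ}
    (hu : ∀ y ∈ Set.Icc (x - 1) (x + 1), |u y - L| ≤ ε) :
    ∀ h ∈ Set.Icc (0 : ℝ) 1, |f (x + h) + f (x - h) - 2 * f x - h ^ 2 * L| ≤ 2 * ε := by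
  refine abs_le_of_deriv_bound (g' := fun h => f' (x + h) - f' (x - h) - 2 * h * L)
    (by simp; ring) (fun h => ?_) ?_
  · have := (((hasDerivAt_shift_add hf x h).add (hasDerivAt_shift_sub hf x h)).sub_const
      (2 * f x)).sub ((hasDerivAt_pow 2 h).mul_const L)
    refine this.congr_deriv ?_
    simp; ring
  refine abs_le_of_deriv_bound (g' := fun h => u (x + h) + u (x - h) - 2 * L)
    (by simp) (fun h => ?_) ?_
  · have := ((hasDerivAt_shift_add hf' x h).sub (hasDerivAt_shift_sub hf' x h)).sub
      (((hasDerivAt_id' h).const_mul 2).mul_const L)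
    refine this.congr_deriv ?_
    simp
  rintro h ⟨h0, h1⟩
  have a := abs_le.1 (hu (x + h) ⟨by linarith, by linarith⟩)
  have b := abs_le.1 (hu (x - h) ⟨by linarith, by linarith⟩)
  exact abs_le.2 ⟨by linarith [a.1, b.1], by linarith [a.2, b.2]⟩

/-- If `S'''' = u` is `ε`-close to `L` on `[x-1, x+1]`, the symmetric second difference of `S`
minus `S'' = P` is `2ε`-close to `L / 12`. -/
lemma fourth_difference_bound {S S₁ P f u : ℝ → ℝ} (hS : ∀ x, HasDerivAt S (S₁ x) x)
    (hS₁ : ∀ x, HasDerivAt S₁ (P x) x) (hP : ∀ x, HasDerivAt P (f x) x)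
    (hf : ∀ x, HasDerivAt f (u x) x) {x L ε : ℝ}
    (hu : ∀ y ∈ Set.Icc (x - 1) (x + 1), |u y - L| ≤ ε) :
    |S (x + 1) + S (x - 1) - 2 * S x - P x - L / 12| ≤ 2 * ε := by
  have key : ∀ h ∈ Set.Icc (0 : ℝ) 1,
      |S (x + h) + S (x - h) - 2 * S x - h ^ 2 * P x - h ^ 4 * (L / 12)| ≤ 2 * ε := by
    refine abs_le_of_deriv_bound
      (g' := fun h => S₁ (x + h) - S₁ (x - h) - 2 * h * P x - h ^ 3 * (L / 3))
      (by simp; ring) (fun h => ?_) ?_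
    · have := ((((hasDerivAt_shift_add hS x h).add (hasDerivAt_shift_sub hS x h)).sub_const
        (2 * S x)).sub ((hasDerivAt_pow 2 h).mul_const (P x))).sub
        ((hasDerivAt_pow 4 h).mul_const (L / 12))
      refine this.congr_deriv ?_
      simp; ring
    refine abs_le_of_deriv_bound
      (g' := fun h => P (x + h) + P (x - h) - 2 * P x - h ^ 2 * L)
      (by simp) (fun h => ?_) (second_difference_bound hP hf hu)
    · have := (((hasDerivAt_shift_add hS₁ x h).sub (hasDerivAt_shift_sub hS₁ x h)).sub
        (((hasDerivAt_id' h).const_mul 2).mul_const (P x))).sub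
        ((hasDerivAt_pow 3 h).mul_const (L / 3))
      refine this.congr_deriv ?_
      simp; ring
  simpa using key 1 ⟨zero_le_one, le_rfl⟩

lemma eventually_window_atTop {u : ℝ → ℝ} {L : ℝ} (h : Tendsto u atTop (𝓝 L)) (ε : ℝ)
    (hε : 0 < ε) : ∀ᶠ x in atTop, ∀ y ∈ Set.Icc (x - 1) (x + 1), |u y - L| ≤ ε := by
  have h' := Metric.tendsto_nhds.1 h ε hε
  obtain ⟨N, hN⟩ := eventually_atTop.1 h'
  filter_upwards [eventually_ge_atTop (N + 1)] with x hx y hy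
  exact (hN y (by linarith [hy.1])).le

lemma eventually_window_atBot {u : ℝ → ℝ} {L : ℝ} (h : Tendsto u atBot (𝓝 L)) (ε : ℝ)
    (hε : 0 < ε) : ∀ᶠ x in atBot, ∀ y ∈ Set.Icc (x - 1) (x + 1), |u y - L| ≤ ε := by
  have h' := Metric.tendsto_nhds.1 h ε hε
  obtain ⟨N, hN⟩ := eventually_atBot.1 h'
  filter_upwards [eventually_le_atBot (N - 1)] with x hx y hy
  exact (hN y (by linarith [hy.2])).le

lemma tendsto_of_window {l : Filter ℝ} {u F : ℝ → ℝ} {L M : ℝ}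
    (hw : ∀ ε > 0, ∀ᶠ x in l, ∀ y ∈ Set.Icc (x - 1) (x + 1), |u y - L| ≤ ε)
    (hF : ∀ x ε, (∀ y ∈ Set.Icc (x - 1) (x + 1), |u y - L| ≤ ε) → |F x - M| ≤ 2 * ε) :
    Tendsto F l (𝓝 M) := by
  refine Metric.tendsto_nhds.2 fun ε hε => ?_
  filter_upwards [hw (ε / 3) (by positivity)] with x hx
  have := hF x _ hx
  rw [Real.dist_eq]
  linarith

lemma eq_of_hasDerivAt_zero {f : ℝ → ℝ} (hf : ∀ x, HasDerivAt f 0 x) (x y : ℝ) : f x = f y :=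
  is_const_of_deriv_eq_zero (fun x => (hf x).differentiableAt) (fun x => (hf x).deriv) x y

lemma hasDerivAt_diff {f f' : ℝ → ℝ} (hf : ∀ x, HasDerivAt f (f' x) x) (x : ℝ) :
    HasDerivAt (fun x => f (x + 1) + f (x - 1) - 2 * f x)
      (f' (x + 1) + f' (x - 1) - 2 * f' x) x :=
  (((hf (x + 1)).comp_add_const x 1).add ((hf (x - 1)).comp_sub_const x 1)).sub
    ((hf x).const_mul 2)

/-- **Non-existence of discrete shock waves for the quadratic potential** `W(u) = u²/2`
(so `W'(u) = u`): for `u_l ≠ u_r` there is no travelling-wave profile `φ ∈ C²(ℝ)` with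
`c²φ''(x) = (φ(x+1) − φ(x)) − (φ(x) − φ(x−1))` whose derivative tends to `u_l` at `−∞`
and `u_r` at `+∞`. -/
theorem no_discrete_shock_quadratic
    (ul ur : ℝ) (hne : ul ≠ ur) :
    ¬ ∃ (φ : ℝ → ℝ) (c : ℝ), ContDiff ℝ 2 φ ∧
      (∀ x : ℝ, c ^ 2 * deriv (deriv φ) x = (φ (x + 1) - φ x) - (φ x - φ (x - 1))) ∧
      Tendsto (deriv φ) atBot (nhds ul) ∧ Tendsto (deriv φ) atTop (nhds ur) := by
  rintro ⟨φ, c, hφ, heq, hl, hr⟩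
  have hφ1 : ∀ x, HasDerivAt φ (deriv φ x) x := fun x =>
    ((hφ.differentiable (by norm_num)) x).hasDerivAt
  have hφ2 : ∀ x, HasDerivAt (deriv φ) (deriv (deriv φ) x) x := fun x => by
    have h : ContDiff ℝ 1 (deriv φ) := ((contDiff_succ_iff_deriv (n := 1)).1 hφ).2.2
    exact ((h.differentiable (by norm_num)) x).hasDerivAt
  have cont : ∀ {f f' : ℝ → ℝ}, (∀ x, HasDerivAt f (f' x) x) → Continuous f := fun h =>
    continuous_iff_continuousAt.2 fun x => (h x).continuousAt
  obtain ⟨P, hP⟩ := exists_antideriv φ (cont hφ1)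
  obtain ⟨S₁, hS₁⟩ := exists_antideriv P (cont hP)
  obtain ⟨S, hS⟩ := exists_antideriv S₁ (cont hS₁)
  have hwl := eventually_window_atBot hl
  have hwr := eventually_window_atTop hr
  have hbound : ∀ L x ε, (∀ y ∈ Set.Icc (x - 1) (x + 1), |deriv φ y - L| ≤ ε) →
      |(P (x + 1) + P (x - 1) - 2 * P x) - L| ≤ 2 * ε := fun L x ε h => by
    simpa using second_difference_bound hP hφ1 h 1 ⟨zero_le_one, le_rfl⟩
  -- First integral of the travelling-wave equation.
  have hE0 := eq_of_hasDerivAt_zero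
    (f := fun x => (P (x + 1) + P (x - 1) - 2 * P x) - c ^ 2 * deriv φ x) (fun x => by
      refine HasDerivAt.congr_deriv ((hasDerivAt_diff hP x).sub ((hφ2 x).const_mul (c ^ 2))) ?_
      rw [heq x]; ring)
  have const_lim : ∀ {l : Filter ℝ} [l.NeBot] {F : ℝ → ℝ} {M : ℝ}, (∀ x y, F x = F y) →
      Tendsto F l (𝓝 M) → F 0 = M := fun {l _ F M} hc ht =>
    tendsto_nhds_unique (tendsto_const_nhds.congr fun x => hc 0 x) ht
  have hKl := const_lim hE0 ((tendsto_of_window hwl (hbound ul)).sub (hl.const_mul (c ^ 2)))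
  have hKr := const_lim hE0 ((tendsto_of_window hwr (hbound ur)).sub (hr.const_mul (c ^ 2)))
  have hc : c ^ 2 = 1 := by
    have : (1 - c ^ 2) * (ul - ur) = 0 := by linarith
    rcases mul_eq_zero.1 this with h | h
    · linarith
    · exact absurd (sub_eq_zero.1 h) hne
  have hE0' : ∀ x, (P (x + 1) + P (x - 1) - 2 * P x) - deriv φ x = 0 := fun x => by
    have := hE0 x 0
    simp only [hc] at this hKl
    linarith
  have hE1 := eq_of_hasDerivAt_zero
    (f := fun x => (S₁ (x + 1) + S₁ (x - 1) - 2 * S₁ x) - φ x) (fun x => by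
      refine HasDerivAt.congr_deriv ((hasDerivAt_diff hS₁ x).sub (hφ1 x)) ?_
      exact hE0' x)
  set E : ℝ → ℝ := fun x => S (x + 1) + S (x - 1) - 2 * S x - P x with hE
  set k : ℝ := (S₁ (0 + 1) + S₁ (0 - 1) - 2 * S₁ 0) - φ 0 with hk
  have hEder : ∀ x, HasDerivAt E k x := fun x => by
    refine HasDerivAt.congr_deriv ((hasDerivAt_diff hS x).sub (hP x)) ?_
    exact hE1 x 0
  have haff := eq_of_hasDerivAt_zero (f := fun x => E x - k * x) (fun x => by
    refine HasDerivAt.congr_deriv ((hEder x).sub ((hasDerivAt_id' x).const_mul k)) ?_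
    simp)
  have hEl : Tendsto E atBot (𝓝 (ul / 12)) :=
    tendsto_of_window hwl fun x ε h => fourth_difference_bound hS hS₁ hP hφ1 h
  have hEr : Tendsto E atTop (𝓝 (ur / 12)) :=
    tendsto_of_window hwr fun x ε h => fourth_difference_bound hS hS₁ hP hφ1 h
  -- The increment `E (x + 1) - E x = k` tends to `0`, so the affine function `E` has slope `0`.
  have hk0 : k = 0 := by
    have h1 := (hEr.comp (tendsto_atTop_add_const_right atTop (1 : ℝ) tendsto_id)).sub hEr
    rw [sub_self] at h1
    refine tendsto_nhds_unique (tendsto_const_nhds.congr fun x => ?_) h1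
    have := haff (x + 1) x
    simp only [Function.comp, id] at this ⊢
    linarith
  have hEc : ∀ x y, E x = E y := fun x y => by
    have := haff x y
    simpa only [hk0, zero_mul, sub_zero] using this
  have := const_lim hEc hEl
  have := const_lim hEc hEr
  exact hne (by linarith)
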